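/- Let S be a nonempty b-bounded subset of a Minkowski space with strictly convex norm. Then b-exp(bh₁(S)) ⊆ cl(S), i.e., every b-exposed point of the ball hull of S lies in the closure of S. -/

import Mathlib

open Metric Set

/-- The ball hull of `S`: intersection of all closed balls of radius 1 containing `S`. -/
def ballHull {E : Type*} [NormedAddCommGroup E] (S : Set E) : Set E :=
  ⋂ x ∈ {x : E | S ⊆ closedBall x 1}, closedBall x 1

/-- The circumradius of `S`: the least `r ≥ 0` such that `S` is contained in some
closed ball of radius `r`. -/
noncomputable def circumradius {E : Type*} [NormedAddCommGroup E] (S : Set E) : ℝ :=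
  sInf {r : ℝ | 0 ≤ r ∧ ∃ x : E, S ⊆ closedBall x r}

/-- A b-convex body: a bounded nonempty set equal to its ball hull. -/
def IsBConvexBody {E : Type*} [NormedAddCommGroup E] (K : Set E) : Prop :=
  Bornology.IsBounded K ∧ K.Nonempty ∧ ballHull K = K

/-- `F` is an exposed b-face of `K`: `F = K ∩ S(y,1)` for some supporting sphere `S(y,1)`. -/
def IsExposedBFace {E : Type*} [NormedAddCommGroup E] (K F : Set E) : Prop :=
  ∃ y : E, K ⊆ closedBall y 1 ∧ (K ∩ sphere y 1).Nonempty ∧ F = K ∩ sphere y 1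

/-- The set of b-exposed points of `K`. -/
def bExp {E : Type*} [NormedAddCommGroup E] (K : Set E) : Set E :=
  {x : E | ∃ y : E, K ⊆ closedBall y 1 ∧ K ∩ sphere y 1 = {x}}

/-!
A ball `closedBall y r` with `r ≤ 1` is its own ball hull: it is cut out by the unit balls whose
centres lie within `1 - r` of `y`. If the closure of `S` is compact and misses the supporting
sphere `sphere y 1` of the hull, then `S` lies in `closedBall y r` for some `r < 1`, hence so does
its hull, which therefore misses the sphere too. So every exposed b-face meets the closure of `S`,
in particular every face that is a single point.
-/

section NormedGroup

variable {E : Type*} [NormedAddCommGroup E] {S T : Set E} {x : E}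

theorem mem_ballHull_iff : x ∈ ballHull S ↔ ∀ y, S ⊆ closedBall y 1 → x ∈ closedBall y 1 :=
  mem_iInter₂

theorem subset_ballHull (S : Set E) : S ⊆ ballHull S :=
  subset_iInter₂ fun _ hy => hy

theorem ballHull_mono (hST : S ⊆ T) : ballHull S ⊆ ballHull T :=
  biInter_subset_biInter_left fun _ hy => hST.trans hy

theorem isClosed_ballHull (S : Set E) : IsClosed (ballHull S) :=
  isClosed_biInter fun _ _ => isClosed_closedBall

theorem closure_subset_ballHull (S : Set E) : closure S ⊆ ballHull S :=
  closure_minimal (subset_ballHull S) (isClosed_ballHull S)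

theorem isBounded_of_mem_bExp_ballHull (hx : x ∈ bExp (ballHull S)) : Bornology.IsBounded S :=
  let ⟨_, hy, _⟩ := hx
  isBounded_closedBall.subset ((subset_ballHull S).trans hy)

theorem isExposedBFace_singleton_of_mem_bExp (hx : x ∈ bExp S) : IsExposedBFace S {x} :=
  let ⟨y, hy, hface⟩ := hx
  ⟨y, hy, hface ▸ singleton_nonempty x, hface.symm⟩

end NormedGroup

theorem exists_subset_closedBall_of_isCompact_of_subset_ball {X : Type*} [PseudoMetricSpace X]
    {K : Set X} {y : X} {R : ℝ} (hR : 0 < R) (hK : IsCompact K) (hKR : K ⊆ ball y R) :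
    ∃ r ∈ Ico 0 R, K ⊆ closedBall y r := by
  rcases K.eq_empty_or_nonempty with rfl | hne
  · exact ⟨0, ⟨le_rfl, hR⟩, empty_subset _⟩
  · obtain ⟨z, hz, hmax⟩ :=
      hK.exists_isMaxOn hne (f := fun p => dist p y) (by fun_prop)
    exact ⟨dist z y, ⟨dist_nonneg, hKR hz⟩, fun _ hp => hmax hp⟩

section NormedSpace

variable {E : Type*} [NormedAddCommGroup E] [NormedSpace ℝ E] {S F : Set E}

theorem ballHull_closedBall (y : E) {r : ℝ} (hr₀ : 0 ≤ r) (hr₁ : r ≤ 1) :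
    ballHull (closedBall y r) = closedBall y r := by
  refine Subset.antisymm (fun x hx => ?_) (subset_ballHull _)
  by_contra hxr
  have hrd : r < dist y x := by simpa only [mem_closedBall', not_le] using hxr
  have hd : 0 < dist y x := hr₀.trans_lt hrd
  -- Moving the centre `y` away from `x` by `1 - r` keeps `closedBall y r` in the unit ball.
  let t : ℝ := (1 - r) / dist y x
  have ht : 0 ≤ t := div_nonneg (sub_nonneg.2 hr₁) hd.le
  have htd : t * dist y x = 1 - r := div_mul_cancel₀ _ hd.ne'
  let c : E := AffineMap.lineMap y x (-t)
  have hyc : dist y c = 1 - r := by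
    rw [dist_left_lineMap, norm_neg, Real.norm_of_nonneg ht, htd]
  have hxc : dist x c = dist y x + (1 - r) := by
    rw [dist_right_lineMap, Real.norm_of_nonneg (by linarith), ← htd]
    ring
  have hball : closedBall y r ⊆ closedBall c 1 :=
    closedBall_subset_closedBall' (by rw [hyc]; linarith)
  have hxc_le : dist x c ≤ 1 := mem_ballHull_iff.1 hx c hball
  linarith

theorem ballHull_subset_closedBall {y : E} {r : ℝ} (hr₀ : 0 ≤ r) (hr₁ : r ≤ 1)
    (hS : S ⊆ closedBall y r) : ballHull S ⊆ closedBall y r :=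
  (ballHull_mono hS).trans (ballHull_closedBall y hr₀ hr₁).subset

theorem IsExposedBFace.inter_closure_nonempty (hF : IsExposedBFace (ballHull S) F)
    (hS : IsCompact (closure S)) : (F ∩ closure S).Nonempty := by
  obtain ⟨y, hy, ⟨x, hx, hxy⟩, rfl⟩ := hF
  by_contra hdisj
  have hball : closure S ⊆ ball y 1 := fun z hz =>
    have hzK : z ∈ ballHull S := closure_subset_ballHull S hz
    lt_of_le_of_ne (hy hzK) fun hzy => hdisj ⟨z, ⟨hzK, hzy⟩, hz⟩
  obtain ⟨r, ⟨hr₀, hr₁⟩, hSr⟩ :=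
    exists_subset_closedBall_of_isCompact_of_subset_ball one_pos hS hball
  have hxr : dist x y ≤ r :=
    ballHull_subset_closedBall hr₀ hr₁.le (subset_closure.trans hSr) hx
  exact (hxr.trans_lt hr₁).ne hxy

theorem stmt_17_general (hS : IsCompact (closure S)) : bExp (ballHull S) ⊆ closure S :=
  fun _ hx => singleton_inter_nonempty.1 <|
    (isExposedBFace_singleton_of_mem_bExp hx).inter_closure_nonempty hS

end NormedSpace

theorem stmt_17 {E : Type*} [NormedAddCommGroup E] [NormedSpace ℝ E]
    [FiniteDimensional ℝ E] [Nontrivial E] [StrictConvexSpace ℝ E]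
    (S : Set E) (hS : S.Nonempty) (hbb : circumradius S < 1) :
    bExp (ballHull S) ⊆ closure S := by
  intro x hx
  exact stmt_17_general (isBounded_of_mem_bExp_ballHull hx).isCompact_closure hx
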